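/- If no two generators of a rank-n Coxeter system (W,S) commute and all off-diagonal Coxeter matrix entries are at least 3, then every small root is a nonnegative combination of at most two simple roots, i.e., in the projective picture all small roots lie on the edges of the simplex conv(Δ). -/

import Mathlib

open scoped Classical

/-- A geometric representation (with based root system) of a Coxeter system `cs`
on a real vector space `V`, preserving a symmetric bilinear form `form`, with
simple roots `root i` satisfying the standard inner products
`B(α_i, α_j) = -cos (π / m i j)` (with value `≤ -1` when `m i j = ∞`, encoded `0`). -/
structure GeomRep {B : Type*} {W : Type*} [Group W] (M : CoxeterMatrix B)
    (cs : CoxeterSystem M W) (V : Type*) [AddCommGroup V] [Module ℝ V] where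
  form : LinearMap.BilinForm ℝ V
  form_symm : ∀ u v : V, form u v = form v u
  ρ : W →* (V ≃ₗ[ℝ] V)
  ρ_faithful : Function.Injective ρ
  root : B → V
  root_indep : LinearIndependent ℝ root
  form_preserved : ∀ (w : W) (u v : V), form (ρ w u) (ρ w v) = form u v
  form_root_finite : ∀ i j : B, M i j ≠ 0 →
    form (root i) (root j) = - Real.cos (Real.pi / (M i j : ℝ))
  form_root_infinite : ∀ i j : B, M i j = 0 → form (root i) (root j) ≤ -1
  simple_act : ∀ (i : B) (v : V),
    ρ (cs.simple i) v = v - (2 * form (root i) v) • root i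

namespace GeomRep

variable {B : Type*} {W : Type*} [Group W] {M : CoxeterMatrix B}
  {cs : CoxeterSystem M W} {V : Type*} [AddCommGroup V] [Module ℝ V]
  (G : GeomRep M cs V)

/-- The root system `Φ = W · Δ`. -/
def Roots : Set V := {v | ∃ (w : W) (i : B), v = G.ρ w (G.root i)}

/-- `v` is a nonnegative linear combination of simple roots. -/
def IsNonnegComb (v : V) : Prop :=
  ∃ c : B →₀ ℝ, (∀ i, 0 ≤ c i) ∧ v = c.sum fun i a => a • G.root i

/-- The set of positive roots `Φ⁺`. -/
def PosRoots : Set V := {v ∈ G.Roots | G.IsNonnegComb v}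

/-- The set of negative roots `Φ⁻ = -Φ⁺`. -/
def NegRoots : Set V := {v ∈ G.Roots | G.IsNonnegComb (-v)}

/-- The reflection in a root `α`, as a linear endomorphism of `V`. -/
def refl (α : V) : Module.End ℝ V :=
  LinearMap.id - (2 : ℝ) • LinearMap.smulRight (G.form α) α

/-- The (left) inversion set `N(w) = Φ⁺ ∩ w(Φ⁻)`. -/
def invSet (w : W) : Set V := {β ∈ G.PosRoots | G.ρ w⁻¹ β ∈ G.NegRoots}

/-- `β` dominates `α` : every `w` sending `β` negative sends `α` negative. -/
def Dominates (β α : V) : Prop := ∀ w : W, G.ρ w β ∈ G.NegRoots → G.ρ w α ∈ G.NegRoots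

/-- A small root: a positive root dominating no positive root other than itself. -/
def IsSmall (β : V) : Prop :=
  β ∈ G.PosRoots ∧ ∀ α ∈ G.PosRoots, G.Dominates β α → α = β

/-- The conical (nonnegative) hull of a set. -/
def cone (X : Set V) : Set V :=
  {v | ∃ c : V →₀ ℝ, (∀ x, 0 ≤ c x) ∧ ↑c.support ⊆ X ∧ v = c.sum fun x a => a • x}

/-- Low element: its inversion set is the biconvex closure of its small inversions. -/
def IsLow (Sm : Set V) (w : W) : Prop :=
  G.invSet w = cone (G.invSet w ∩ Sm) ∩ G.PosRoots

/-- The closed fundamental chamber. -/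
def chamber : Set V := {v | ∀ i : B, 0 ≤ G.form v (G.root i)}

/-- The Tits cone `T = ⋃_{w ∈ W} w(C̄)`. -/
def titsCone : Set V := ⋃ w : W, ⇑(G.ρ w) '' G.chamber

end GeomRep

/-- The Chebyshev-type sequence `U_0 = 0, U_1 = 1, U_{n+2} = x U_{n+1} - U_n`. -/
noncomputable def chebU (x : ℝ) : ℕ → ℝ
  | 0 => 0
  | 1 => 1
  | (n + 2) => x * chebU x (n + 1) - chebU x n

/-- Zero or at least one. -/
def ZeroOrGeOne (a : ℝ) : Prop := a = 0 ∨ 1 ≤ a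

theorem ZeroOrGeOne.nonneg {a : ℝ} (h : ZeroOrGeOne a) : 0 ≤ a := by
  rcases h with h | h <;> linarith

theorem ZeroOrGeOne.comb {a b p q : ℝ} (ha : ZeroOrGeOne a) (hb : ZeroOrGeOne b)
    (hp : ZeroOrGeOne p) (hq : ZeroOrGeOne q) : ZeroOrGeOne (p * a + q * b) := by
  have ha0 := ha.nonneg
  have hb0 := hb.nonneg
  have hp0 := hp.nonneg
  have hq0 := hq.nonneg
  have key : ∀ {x y : ℝ}, ZeroOrGeOne x → ZeroOrGeOne y → ZeroOrGeOne (x * y) := by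
    intro x y hx hy
    rcases hx with hx | hx
    · left; simp [hx]
    · rcases hy with hy | hy
      · left; simp [hy]
      · right; nlinarith
  have h1 := key hp ha
  have h2 := key hq hb
  have h10 := h1.nonneg
  have h20 := h2.nonneg
  rcases h1 with h1 | h1
  · rcases h2 with h2 | h2
    · left; linarith
    · right; linarith
  · right; linarith

theorem chebU_sin (θ : ℝ) (n : ℕ) :
    Real.sin θ * chebU (2 * Real.cos θ) n = Real.sin (n * θ) ∧
    Real.sin θ * chebU (2 * Real.cos θ) (n + 1) = Real.sin ((n + 1 : ℕ) * θ) := by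
  induction n with
  | zero => simp [chebU]
  | succ n ih =>
    refine ⟨ih.2, ?_⟩
    have e1 : ((n + 1 + 1 : ℕ) : ℝ) * θ = ((n + 1 : ℕ) : ℝ) * θ + θ := by push_cast; ring
    have e2 : (n : ℝ) * θ = ((n + 1 : ℕ) : ℝ) * θ - θ := by push_cast; ring
    have h1 := ih.1
    rw [e2, Real.sin_sub] at h1
    rw [e1, Real.sin_add]
    have : chebU (2 * Real.cos θ) (n + 1 + 1) =
      2 * Real.cos θ * chebU (2 * Real.cos θ) (n + 1) - chebU (2 * Real.cos θ) n := rfl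
    rw [this]
    linear_combination 2 * Real.cos θ * ih.2 - h1

theorem chebU_finite (m : ℕ) (hm : 2 ≤ m) (n : ℕ) (hn : n ≤ m) :
    ZeroOrGeOne (chebU (2 * Real.cos (Real.pi / m)) n) := by
  have hm0 : (0 : ℝ) < m := by positivity
  have hm2 : (2 : ℝ) ≤ m := by exact_mod_cast hm
  have hpi := Real.pi_pos
  set θ := Real.pi / m with hθ
  have hmθ : m * θ = Real.pi := by rw [hθ]; field_simp
  have hθ0 : 0 < θ := by positivity
  have hθ2 : θ < Real.pi := by nlinarith
  have hs : 0 < Real.sin θ := Real.sin_pos_of_pos_of_lt_pi hθ0 hθ2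
  have hU := (chebU_sin θ n).1
  rcases Nat.eq_zero_or_pos n with h0 | h0
  · left; subst h0; rfl
  rcases hn.eq_or_lt with h1 | h1
  · left
    rw [h1, hmθ, Real.sin_pi, ← h1] at hU
    exact (mul_eq_zero.1 hU).resolve_left hs.ne'
  · right
    have hn1 : (1 : ℝ) ≤ n := by exact_mod_cast h0
    have hnm : (n : ℝ) + 1 ≤ m := by exact_mod_cast h1
    have hd : Real.sin (n * θ) - Real.sin θ =
        2 * Real.sin ((n * θ - θ) / 2) * Real.cos ((n * θ + θ) / 2) := Real.sin_sub_sin _ _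
    have hA : 0 ≤ Real.sin ((n * θ - θ) / 2) := by
      apply Real.sin_nonneg_of_nonneg_of_le_pi <;> nlinarith
    have hB : 0 ≤ Real.cos ((n * θ + θ) / 2) := by
      apply Real.cos_nonneg_of_neg_pi_div_two_le_of_le <;> nlinarith
    have : 0 ≤ Real.sin (n * θ) - Real.sin θ := by rw [hd]; positivity
    by_contra hc
    push Not at hc
    nlinarith

theorem chebU_infinite (x : ℝ) (hx : 2 ≤ x) (n : ℕ) :
    0 ≤ chebU x n ∧ chebU x n + 1 ≤ chebU x (n + 1) := by
  induction n with
  | zero => simp [chebU]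
  | succ n ih =>
    have : chebU x (n + 1 + 1) = x * chebU x (n + 1) - chebU x n := rfl
    rw [this]
    constructor
    · linarith
    · nlinarith

theorem chebU_infinite' (x : ℝ) (hx : 2 ≤ x) (n : ℕ) : ZeroOrGeOne (chebU x n) := by
  cases n with
  | zero => left; rfl
  | succ n => right; have := chebU_infinite x hx n; linarith

namespace GeomRep

variable {B : Type*} {W : Type*} [Group W] {M : CoxeterMatrix B}
  {cs : CoxeterSystem M W} {V : Type*} [AddCommGroup V] [Module ℝ V]
  (G : GeomRep M cs V)

theorem exists_coord : ∃ f : V →ₗ[ℝ] (B →₀ ℝ),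
    f ∘ₗ Finsupp.linearCombination ℝ G.root = LinearMap.id :=
  LinearMap.exists_leftInverse_of_injective _ (LinearMap.ker_eq_bot.2 G.root_indep)

/-- Coordinates with respect to the simple roots. -/
noncomputable def coord : V →ₗ[ℝ] (B →₀ ℝ) := G.exists_coord.choose

theorem coord_lc (c : B →₀ ℝ) : G.coord (Finsupp.linearCombination ℝ G.root c) = c :=
  LinearMap.congr_fun G.exists_coord.choose_spec c

theorem coord_root (i : B) : G.coord (G.root i) = Finsupp.single i 1 := by
  have := G.coord_lc (Finsupp.single i 1)
  simpa using this

/-- The span of the simple roots. -/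
noncomputable def spn : Submodule ℝ V := LinearMap.range (Finsupp.linearCombination ℝ G.root)

theorem root_mem (i : B) : G.root i ∈ G.spn := ⟨Finsupp.single i 1, by simp⟩

theorem lc_coord {v : V} (hv : v ∈ G.spn) :
    Finsupp.linearCombination ℝ G.root (G.coord v) = v := by
  obtain ⟨c, rfl⟩ := hv
  rw [coord_lc]

theorem nonneg_iff (v : V) : G.IsNonnegComb v ↔ v ∈ G.spn ∧ ∀ i, 0 ≤ G.coord v i := by
  constructor
  · rintro ⟨c, hc, hv⟩
    have hv' : v = Finsupp.linearCombination ℝ G.root c := hv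
    refine ⟨⟨c, hv'.symm⟩, ?_⟩
    rw [hv', coord_lc]; exact hc
  · rintro ⟨hv, hc⟩
    exact ⟨G.coord v, hc, (G.lc_coord hv).symm⟩

theorem act_mul (w w' : W) (v : V) : G.ρ (w * w') v = G.ρ w (G.ρ w' v) := by
  rw [map_mul]; rfl

theorem act_one (v : V) : G.ρ 1 v = v := by rw [map_one]; rfl

theorem act_simple_simple (i : B) (v : V) : G.ρ (cs.simple i) (G.ρ (cs.simple i) v) = v := by
  rw [← act_mul, cs.simple_mul_simple_self, act_one]

theorem form_self (i : B) : G.form (G.root i) (G.root i) = 1 := by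
  rw [G.form_root_finite i i (by simp)]; simp

theorem act_simple_root (i : B) : G.ρ (cs.simple i) (G.root i) = - G.root i := by
  rw [G.simple_act, form_self]; module

theorem act_mem (w : W) {v : V} (hv : v ∈ G.spn) : G.ρ w v ∈ G.spn := by
  induction w using cs.simple_induction_left with
  | one => rwa [act_one]
  | mul_simple_left w i ih =>
    rw [act_mul, G.simple_act]
    exact Submodule.sub_mem _ ih (Submodule.smul_mem _ _ (G.root_mem i))

theorem roots_mem {v : V} (hv : v ∈ G.Roots) : v ∈ G.spn := by
  obtain ⟨w, i, rfl⟩ := hv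
  exact G.act_mem w (G.root_mem i)

theorem roots_act (w : W) {v : V} (hv : v ∈ G.Roots) : G.ρ w v ∈ G.Roots := by
  obtain ⟨u, i, rfl⟩ := hv
  exact ⟨w * u, i, (G.act_mul _ _ _).symm⟩

theorem roots_neg {v : V} (hv : v ∈ G.Roots) : -v ∈ G.Roots := by
  obtain ⟨u, i, rfl⟩ := hv
  exact ⟨u * cs.simple i, i, by rw [act_mul, act_simple_root, map_neg]⟩

theorem roots_norm {v : V} (hv : v ∈ G.Roots) : G.form v v = 1 := by
  obtain ⟨u, i, rfl⟩ := hv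
  rw [G.form_preserved, form_self]

theorem root_mem_roots (i : B) : G.root i ∈ G.Roots := ⟨1, i, (G.act_one _).symm⟩

/-- The reflection in a root is realized by a group element. -/
theorem exists_refl {v : V} (hv : v ∈ G.Roots) :
    ∃ t : W, ∀ x, G.ρ t x = x - (2 * G.form v x) • v := by
  obtain ⟨u, i, rfl⟩ := hv
  refine ⟨u * cs.simple i * u⁻¹, fun x => ?_⟩
  have hx : G.ρ u (G.ρ u⁻¹ x) = x := by rw [← act_mul]; simp [act_one]
  rw [act_mul, act_mul, G.simple_act, map_sub, map_smul, hx,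
    ← G.form_preserved u (G.root i) (G.ρ u⁻¹ x), hx]

/-- Vectors in the span with every coordinate zero or at least one. -/
def Good (v : V) : Prop := v ∈ G.spn ∧ ∀ i, ZeroOrGeOne (G.coord v i)

theorem dihedral (s t : B) (k : ℕ) :
    G.ρ (cs.wordProd (CoxeterSystem.alternatingWord s t k)) (G.root s) =
      if Even k then chebU (-2 * G.form (G.root s) (G.root t)) (k + 1) • G.root s
          + chebU (-2 * G.form (G.root s) (G.root t)) k • G.root t
        else chebU (-2 * G.form (G.root s) (G.root t)) k • G.root s
          + chebU (-2 * G.form (G.root s) (G.root t)) (k + 1) • G.root t := by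
  induction k with
  | zero => simp [CoxeterSystem.alternatingWord, chebU]
  | succ k ih =>
    rw [CoxeterSystem.alternatingWord_succ', cs.wordProd_cons, act_mul, ih]
    have hc : chebU (-2 * G.form (G.root s) (G.root t)) (k + 1 + 1) =
      (-2 * G.form (G.root s) (G.root t)) * chebU (-2 * G.form (G.root s) (G.root t)) (k + 1)
        - chebU (-2 * G.form (G.root s) (G.root t)) k := rfl
    by_cases hk : Even k
    · have hk' : ¬ Even (k + 1) := by simpa [Nat.even_add_one] using hk
      simp only [hk, hk', if_true, if_false]
      rw [hc, map_add, map_smul, map_smul, act_simple_root, G.simple_act t, G.form_symm (G.root t)]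
      module
    · have hk' : Even (k + 1) := by simpa [Nat.even_add_one] using hk
      simp only [hk, hk', if_true, if_false]
      rw [hc, map_add, map_smul, map_smul, act_simple_root, G.simple_act s]
      module

theorem cheb_form (s t : B) (hst : s ≠ t) (k : ℕ) (hk : M s t = 0 ∨ k ≤ M s t) :
    ZeroOrGeOne (chebU (-2 * G.form (G.root s) (G.root t)) k) := by
  by_cases h0 : M s t = 0
  · exact chebU_infinite' _ (by have := G.form_root_infinite s t h0; linarith) _
  · have h1 : M s t ≠ 1 := fun h => hst ((M.off_diagonal s t).mtr h)
    rw [G.form_root_finite s t h0, neg_mul_neg]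
    exact chebU_finite _ (by omega) _ (hk.resolve_left h0)

theorem maximal_alt (cs : CoxeterSystem M W) (s t : B) (w : W) : ∀ (n : ℕ) (v : W) (k : ℕ), cs.length v = n → 1 ≤ k →
    w = v * cs.wordProd (CoxeterSystem.alternatingWord s t k) →
    cs.length w = cs.length v + k →
    ∃ (v' : W) (k' : ℕ), 1 ≤ k' ∧
      w = v' * cs.wordProd (CoxeterSystem.alternatingWord s t k') ∧
      cs.length w = cs.length v' + k' ∧ ¬ cs.IsRightDescent v' (if Even k' then t else s) := by
  intro n
  induction n with
  | zero =>
    intro v k hv hk hw hl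
    refine ⟨v, k, hk, hw, hl, ?_⟩
    rw [cs.length_eq_zero_iff] at hv
    rw [hv]; exact cs.not_isRightDescent_one _
  | succ n ih =>
    intro v k hv hk hw hl
    by_cases hd : cs.IsRightDescent v (if Even k then t else s)
    · rw [cs.isRightDescent_iff] at hd
      refine ih (v * cs.simple (if Even k then t else s)) (k + 1) (by omega) (by omega) ?_ (by omega)
      rw [CoxeterSystem.alternatingWord_succ', cs.wordProd_cons, mul_assoc,
        cs.simple_mul_simple_cancel_left, hw]
    · exact ⟨v, k, hk, hw, hl, hd⟩

theorem good_comb {u v : V} {p q : ℝ} (hu : G.Good u) (hv : G.Good v) (hp : ZeroOrGeOne p)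
    (hq : ZeroOrGeOne q) : G.Good (p • u + q • v) := by
  refine ⟨Submodule.add_mem _ (Submodule.smul_mem _ _ hu.1) (Submodule.smul_mem _ _ hv.1), ?_⟩
  intro i
  have := (hu.2 i).comb (hv.2 i) hp hq
  simpa using this

theorem good_of_not_descent : ∀ (n : ℕ) (w : W) (s : B), cs.length w = n →
    ¬ cs.IsRightDescent w s → G.Good (G.ρ w (G.root s)) := by
  intro n
  induction n using Nat.strong_induction_on with
  | _ n ih =>
  intro w s hn hs
  by_cases hw1 : w = 1
  · subst hw1
    rw [act_one]
    refine ⟨G.root_mem s, fun i => ?_⟩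
    rw [coord_root, Finsupp.single_apply]
    split_ifs
    · right; exact le_rfl
    · left; rfl
  obtain ⟨t, ht⟩ := cs.exists_rightDescent_of_ne_one hw1
  have hst : s ≠ t := by rintro rfl; exact hs ht
  have ht' := (cs.isRightDescent_iff).1 ht
  obtain ⟨v, k, hk, hw, hl, hd⟩ := maximal_alt cs s t w _ (w * cs.simple t) 1 rfl le_rfl
    (by simp [CoxeterSystem.alternatingWord]) (by omega)
  -- the other letter is not a descent either
  have hd' : ¬ cs.IsRightDescent v (if Even k then s else t) := by
    intro hc
    rw [cs.isRightDescent_iff] at hc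
    obtain ⟨k, rfl⟩ : ∃ k', k = k' + 1 := ⟨k - 1, by omega⟩
    have e : (if Even (k + 1) then s else t) = (if Even k then t else s) := by
      by_cases hk : Even k <;> simp [hk, Nat.even_add_one]
    rw [e] at hc
    rw [CoxeterSystem.alternatingWord_succ', cs.wordProd_cons, ← mul_assoc] at hw
    have h1 := cs.length_mul_le (v * cs.simple (if Even k then t else s))
      (cs.wordProd (CoxeterSystem.alternatingWord s t k))
    have h2 := cs.length_wordProd_le (CoxeterSystem.alternatingWord s t k)
    rw [CoxeterSystem.length_alternatingWord] at h2
    rw [← hw] at h1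
    omega
  have hds : ¬ cs.IsRightDescent v s ∧ ¬ cs.IsRightDescent v t := by
    by_cases hk : Even k
    · simp only [hk, if_true] at hd hd'; exact ⟨hd', hd⟩
    · simp only [hk, if_false] at hd hd'; exact ⟨hd, hd'⟩
  have hvs := ih (cs.length v) (by omega) v s rfl hds.1
  have hvt := ih (cs.length v) (by omega) v t rfl hds.2
  have hkm : M s t = 0 ∨ k + 1 ≤ M s t := by
    by_contra hc
    push Not at hc
    obtain ⟨hc0, hc1⟩ := hc
    have hnr := cs.not_isReduced_alternatingWord t s (m := k + 1) (by rwa [M.symmetric])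
      (by rw [M.symmetric]; exact hc1)
    have hle := cs.length_wordProd_le (CoxeterSystem.alternatingWord t s (k + 1))
    have hne : cs.length (cs.wordProd (CoxeterSystem.alternatingWord t s (k + 1))) ≠ k + 1 := by
      intro h; apply hnr; rw [CoxeterSystem.IsReduced, h]; simp
    rw [CoxeterSystem.length_alternatingWord] at hle
    have hws : w * cs.simple s = v * cs.wordProd (CoxeterSystem.alternatingWord t s (k + 1)) := by
      rw [CoxeterSystem.alternatingWord_succ, cs.wordProd_concat, hw, mul_assoc]
    have h1 := cs.length_mul_le v (cs.wordProd (CoxeterSystem.alternatingWord t s (k + 1)))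
    rw [← hws] at h1
    rw [cs.not_isRightDescent_iff] at hs
    omega
  have hU1 := G.cheb_form s t hst (k + 1) hkm
  have hU0 := G.cheb_form s t hst k (by omega)
  rw [hw, act_mul, dihedral]
  split_ifs
  · rw [map_add, map_smul, map_smul]; exact G.good_comb hvs hvt hU1 hU0
  · rw [map_add, map_smul, map_smul]; exact G.good_comb hvs hvt hU0 hU1

theorem pos_or_neg' {v : V} (hv : v ∈ G.Roots) : G.Good v ∨ G.Good (-v) := by
  obtain ⟨w, s, rfl⟩ := hv
  by_cases hd : cs.IsRightDescent w s
  · right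
    have := G.good_of_not_descent _ (w * cs.simple s) s rfl
      ((cs.isRightDescent_iff_not_isRightDescent_mul).1 hd)
    rwa [act_mul, act_simple_root, map_neg] at this
  · left; exact G.good_of_not_descent _ w s rfl hd

theorem Good.nonneg {v : V} (h : G.Good v) : G.IsNonnegComb v :=
  (G.nonneg_iff v).2 ⟨h.1, fun i => (h.2 i).nonneg⟩

theorem pos_or_neg {v : V} (hv : v ∈ G.Roots) : v ∈ G.PosRoots ∨ v ∈ G.NegRoots := by
  rcases G.pos_or_neg' hv with h | h
  · exact Or.inl ⟨hv, h.nonneg⟩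
  · exact Or.inr ⟨hv, h.nonneg⟩

theorem ext_coord {u v : V} (hu : u ∈ G.spn) (hv : v ∈ G.spn)
    (h : ∀ i, G.coord u i = G.coord v i) : u = v := by
  rw [← G.lc_coord hu, ← G.lc_coord hv, Finsupp.ext h]

theorem roots_ne_zero {v : V} (hv : v ∈ G.Roots) : v ≠ 0 := by
  rintro rfl
  have := G.roots_norm hv
  simp at this

theorem pos_coord {v : V} (hv : v ∈ G.PosRoots) (i : B) : 0 ≤ G.coord v i :=
  ((G.nonneg_iff v).1 hv.2).2 i

theorem neg_coord {v : V} (hv : v ∈ G.NegRoots) (i : B) : G.coord v i ≤ 0 := by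
  have := ((G.nonneg_iff (-v)).1 hv.2).2 i
  simpa using this

theorem not_pos_neg {v : V} (hv : v ∈ G.PosRoots) (hn : v ∈ G.NegRoots) : False := by
  apply G.roots_ne_zero hv.1
  apply G.ext_coord (G.roots_mem hv.1) (Submodule.zero_mem _)
  intro i
  rw [map_zero]
  exact le_antisymm (G.neg_coord hn i) (G.pos_coord hv i)

theorem neg_mem_neg {v : V} (hv : v ∈ G.PosRoots) : -v ∈ G.NegRoots :=
  ⟨G.roots_neg hv.1, by rw [neg_neg]; exact hv.2⟩

theorem neg_mem_pos {v : V} (hv : v ∈ G.NegRoots) : -v ∈ G.PosRoots :=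
  ⟨G.roots_neg hv.1, hv.2⟩

theorem root_pos (i : B) : G.root i ∈ G.PosRoots := by
  refine ⟨G.root_mem_roots i, (G.nonneg_iff _).2 ⟨G.root_mem i, fun j => ?_⟩⟩
  rw [coord_root, Finsupp.single_apply]
  split_ifs <;> norm_num

theorem pos_good {v : V} (hv : v ∈ G.PosRoots) : G.Good v := by
  rcases G.pos_or_neg' hv.1 with h | h
  · exact h
  · exact (G.not_pos_neg hv ⟨hv.1, h.nonneg⟩).elim

theorem pos_of_coord {v : V} (hv : v ∈ G.Roots) (j : B) (h : 0 < G.coord v j) :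
    v ∈ G.PosRoots :=
  (G.pos_or_neg hv).resolve_right fun hn => absurd (G.neg_coord hn j) (not_le.2 h)

theorem neg_of_coord {v : V} (hv : v ∈ G.Roots) (j : B) (h : G.coord v j < 0) :
    v ∈ G.NegRoots :=
  (G.pos_or_neg hv).resolve_left fun hn => absurd (G.pos_coord hn j) (not_le.2 h)

/-- A positive root supported on one simple root is that simple root. -/
theorem eq_root {v : V} (hv : v ∈ G.PosRoots) (r : B) (h : ∀ j, j ≠ r → G.coord v j = 0) :
    v = G.root r := by
  have h1 : v = G.coord v r • G.root r := by
    apply G.ext_coord (G.roots_mem hv.1) (Submodule.smul_mem _ _ (G.root_mem r))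
    intro j
    rw [map_smul, coord_root, Finsupp.smul_apply, Finsupp.single_apply]
    split_ifs with hj
    · subst hj; simp
    · rw [h j (Ne.symm hj)]; simp
  have h2 := G.roots_norm hv.1
  have h3 := G.pos_coord hv r
  rw [h1] at h2
  simp only [map_smul, LinearMap.smul_apply, form_self, smul_eq_mul, mul_one] at h2
  have : (G.coord v r - 1) * (G.coord v r + 1) = 0 := by linarith
  rcases mul_eq_zero.1 this with h4 | h4
  · have h5 : G.coord v r = 1 := by linarith
    rw [h1, h5, one_smul]
  · linarith

theorem exists_coord_pos {v : V} (hv : v ∈ G.PosRoots) (r : B) (h : v ≠ G.root r) :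
    ∃ j, j ≠ r ∧ 0 < G.coord v j := by
  by_contra hc
  push Not at hc
  exact h (G.eq_root hv r fun j hj => le_antisymm (hc j hj) (G.pos_coord hv j))

theorem coord_simple_act (r j : B) (hj : j ≠ r) (v : V) :
    G.coord (G.ρ (cs.simple r) v) j = G.coord v j := by
  rw [G.simple_act, map_sub, map_smul, coord_root]
  simp [Finsupp.single_apply, hj.symm]

theorem simple_pos {v : V} (hv : v ∈ G.PosRoots) (r : B) (h : v ≠ G.root r) :
    G.ρ (cs.simple r) v ∈ G.PosRoots := by
  obtain ⟨j, hj, hj'⟩ := G.exists_coord_pos hv r h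
  exact G.pos_of_coord (G.roots_act _ hv.1) j (by rwa [G.coord_simple_act r j hj])

theorem finite_inv (w : W) : {v | v ∈ G.PosRoots ∧ G.ρ w v ∈ G.NegRoots}.Finite := by
  induction w using cs.simple_induction_left with
  | one =>
    convert Set.finite_empty
    ext v
    simp only [Set.mem_ofPred_eq, Set.mem_empty_iff_false, iff_false, act_one]
    exact fun h => G.not_pos_neg h.1 h.2
  | mul_simple_left w i ih =>
    refine (ih.union (Set.finite_singleton (G.ρ w⁻¹ (G.root i)))).subset ?_
    rintro v ⟨hv, hn⟩
    rw [act_mul] at hn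
    rcases G.pos_or_neg (G.roots_act w hv.1) with hp | hp
    · right
      by_contra hc
      refine G.not_pos_neg (G.simple_pos hp i ?_) hn
      intro h
      apply hc
      rw [Set.mem_singleton_iff, ← h, ← act_mul]
      simp [act_one]
    · left; exact ⟨hv, hp⟩

/-- Key domination lemma. -/
theorem dominates_simple {β : V} (r : B) (hβ : β ∈ G.PosRoots) (hne : β ≠ G.root r)
    (hb : 1 ≤ G.form β (G.root r)) : G.Dominates β (G.root r) := by
  intro w hw
  rcases G.pos_or_neg (G.roots_act w (G.root_mem_roots r)) with hp | hp
  swap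
  · exact hp
  exfalso
  obtain ⟨j, hj, hjpos⟩ := G.exists_coord_pos hβ r hne
  obtain ⟨t, ht⟩ := G.exists_refl hβ.1
  have hββ := G.roots_norm hβ.1
  have hrr := G.form_self r
  set α := G.root r with hα
  set b := G.form β α with hbdef
  have hab : G.form α β = b := G.form_symm _ _
  -- an infinite family of roots
  have hfam : ∀ n : ℕ, ∃ p q : ℝ, (n : ℝ) ≤ q ∧ q + 1 ≤ p ∧ p • α - q • β ∈ G.Roots := by
    intro n
    induction n with
    | zero => exact ⟨1, 0, by simp, by simp, by simpa using G.root_mem_roots r⟩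
    | succ n ih =>
      obtain ⟨p, q, hq, hpq, hroot⟩ := ih
      have hn : (0 : ℝ) ≤ n := Nat.cast_nonneg n
      have h1 : q + 2 ≤ 2 * b * p - q := by nlinarith
      have h1' : p + 1 ≤ 2 * b * p - q := by nlinarith
      refine ⟨2 * b * (2 * b * p - q) - p, 2 * b * p - q, ?_, ?_, ?_⟩
      · push_cast; linarith
      · nlinarith
      · have := G.roots_act (cs.simple r * t) hroot
        rw [act_mul, ht, G.simple_act, ← hα] at this
        simp only [map_sub, map_smul, smul_eq_mul, hββ, hrr, hab, ← hbdef] at this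
        convert this using 1
        module
  choose p q hq hpq hroot using hfam
  have hinf := (G.finite_inv w).image (fun v => G.coord v j)
  obtain ⟨C, hC⟩ := hinf.bddAbove
  obtain ⟨n, hn⟩ := exists_nat_gt (C / G.coord β j)
  have hαj : G.coord α j = 0 := by rw [hα, coord_root]; simp [Finsupp.single_apply, hj.symm]
  have hcj : G.coord (p (n + 1) • α - q (n + 1) • β) j = - (q (n + 1) * G.coord β j) := by
    rw [map_sub, map_smul, map_smul]; simp [hαj]
  have hqn := hq (n + 1)
  push_cast at hqn
  have hn0 : (0 : ℝ) ≤ n := Nat.cast_nonneg n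
  have hq0 : 0 < q (n + 1) := by linarith
  have hp0 : 0 ≤ p (n + 1) := by linarith [hpq (n + 1)]
  have hneg := G.neg_of_coord (hroot (n + 1)) j (by rw [hcj]; nlinarith)
  have hmem : G.coord (-(p (n + 1) • α - q (n + 1) • β)) j ≤ C := by
    refine hC ⟨_, ⟨G.neg_mem_pos hneg, ?_⟩, rfl⟩
    rw [map_neg]
    apply G.neg_mem_neg
    refine ⟨G.roots_act w (hroot (n + 1)), (G.nonneg_iff _).2
      ⟨G.roots_mem (G.roots_act w (hroot (n + 1))), fun i => ?_⟩⟩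
    have h1 := G.pos_coord hp i
    have h2 := G.neg_coord hw i
    rw [map_sub, map_smul, map_smul, map_sub, map_smul, map_smul]
    simp only [Finsupp.sub_apply, Finsupp.smul_apply, smul_eq_mul]
    nlinarith
  rw [map_neg, Finsupp.neg_apply, hcj, neg_neg] at hmem
  rw [div_lt_iff₀ hjpos] at hn
  nlinarith

theorem small_descend {β : V} (r : B) (hβ : G.IsSmall β) (hne : β ≠ G.root r)
    (hb : 0 < G.form β (G.root r)) : G.IsSmall (G.ρ (cs.simple r) β) := by
  have hγ := G.simple_pos hβ.1 r hne
  refine ⟨hγ, fun α hα hdom => ?_⟩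
  by_cases hαr : α = G.root r
  · exfalso
    subst hαr
    obtain ⟨t, ht⟩ := G.exists_refl hγ.1
    have h1 := G.roots_norm hγ.1
    have hf : G.form (G.ρ (cs.simple r) β) (G.root r) = - G.form β (G.root r) := by
      rw [← G.form_preserved (cs.simple r), act_simple_simple, act_simple_root, map_neg]
    have h2 := hdom t (by
      rw [ht, h1]
      have := G.neg_mem_neg hγ
      convert this using 1
      module)
    refine G.not_pos_neg ⟨h2.1, ?_⟩ h2
    rw [nonneg_iff]
    refine ⟨G.roots_mem h2.1, fun i => ?_⟩
    rw [ht, hf, map_sub, map_smul]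
    have h3 := G.pos_coord hγ i
    have h4 := G.pos_coord hα i
    simp only [Finsupp.sub_apply, Finsupp.smul_apply, smul_eq_mul]
    nlinarith
  · have hα' := G.simple_pos hα r hαr
    have := hβ.2 _ hα' (by
      intro w hw
      have h1 := hdom (w * cs.simple r) (by rwa [act_mul, act_simple_simple])
      rwa [act_mul] at h1)
    rw [← this, act_simple_simple]

theorem depth_descend {β : V} (r : B) (hβ : β ∈ G.PosRoots)
    (hb : 0 < G.form β (G.root r)) (w : W) (hw : G.ρ w β ∈ G.NegRoots) :
    ∃ w' : W, cs.length w' < cs.length w ∧ G.ρ w' (G.ρ (cs.simple r) β) ∈ G.NegRoots := by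
  by_cases hd : cs.IsRightDescent w r
  · exact ⟨w * cs.simple r, hd, by rwa [act_mul, act_simple_simple]⟩
  have hwr : G.ρ w (G.root r) ∈ G.PosRoots :=
    ⟨G.roots_act w (G.root_mem_roots r), (G.good_of_not_descent _ w r rfl hd).nonneg⟩
  have hw1 : w ≠ 1 := by
    rintro rfl
    rw [act_one] at hw
    exact G.not_pos_neg hβ hw
  obtain ⟨s, hs⟩ := cs.exists_leftDescent_of_ne_one hw1
  refine ⟨cs.simple s * w, hs, ?_⟩
  have hroot := G.roots_act (cs.simple s * w) (G.roots_act (cs.simple r) hβ.1)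
  rcases G.pos_or_neg hroot with hp | hp
  swap
  · exact hp
  exfalso
  have hwγ : G.ρ w (G.ρ (cs.simple r) β) =
      G.ρ w β - (2 * G.form β (G.root r)) • G.ρ w (G.root r) := by
    rw [G.simple_act, map_sub, map_smul, G.form_symm]
  have hwγc : ∀ i, G.coord (G.ρ w (G.ρ (cs.simple r) β)) i = G.coord (G.ρ w β) i -
      (2 * G.form β (G.root r)) * G.coord (G.ρ w (G.root r)) i := by
    intro i
    rw [hwγ, map_sub, map_smul]; simp
  have hback : G.ρ (cs.simple s) (G.ρ (cs.simple s * w) (G.ρ (cs.simple r) β)) =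
      G.ρ w (G.ρ (cs.simple r) β) := by rw [act_mul, act_simple_simple]
  have hz : ∀ i, i ≠ s → G.coord (G.ρ w β) i = 0 ∧ G.coord (G.ρ w (G.root r)) i = 0 := by
    intro i hi
    have h1 := G.neg_coord hw i
    have h2 := G.pos_coord hwr i
    have h3 := G.pos_coord hp i
    rw [← G.coord_simple_act s i hi, hback, hwγc] at h3
    constructor <;> nlinarith
  have e1 := G.eq_root hwr s fun i hi => (hz i hi).2
  have e2 := G.eq_root (G.neg_mem_pos hw) s fun i hi => by
    rw [map_neg, Finsupp.neg_apply, (hz i hi).1, neg_zero]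
  have e3 : G.ρ w (G.root r) = G.ρ w (-β) := by rw [e1, map_neg, e2]
  have e4 := (G.ρ w).injective e3
  rw [e4, map_neg, G.roots_norm hβ.1] at hb
  linarith

theorem exists_form_pos {β : V} (hβ : β ∈ G.PosRoots) : ∃ r, 0 < G.form β (G.root r) := by
  by_contra hc
  push Not at hc
  have h1 := G.roots_norm hβ.1
  have h2 := G.lc_coord (G.roots_mem hβ.1)
  have h3 : G.form β (Finsupp.linearCombination ℝ G.root (G.coord β)) ≤ 0 := by
    rw [Finsupp.linearCombination_apply, Finsupp.sum, map_sum]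
    apply Finset.sum_nonpos
    intro i _
    rw [map_smul, smul_eq_mul]
    exact mul_nonpos_of_nonneg_of_nonpos (G.pos_coord hβ i) (hc i)
  rw [h2, h1] at h3
  linarith

theorem form_le_neg_half (h : ∀ i j : B, i ≠ j → M i j = 0 ∨ 3 ≤ M i j) {i j : B} (hij : i ≠ j) :
    G.form (G.root i) (G.root j) ≤ -(1 / 2) := by
  by_cases h0 : M i j = 0
  · have := G.form_root_infinite i j h0; linarith
  · have h3 : 3 ≤ M i j := (h i j hij).resolve_left h0
    rw [G.form_root_finite i j h0]
    have h3' : (3 : ℝ) ≤ M i j := by exact_mod_cast h3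
    have : Real.cos (Real.pi / 3) ≤ Real.cos (Real.pi / M i j) := by
      apply Real.cos_le_cos_of_nonneg_of_le_pi
      · have := Real.pi_pos; positivity
      · linarith [Real.pi_pos]
      · have := Real.pi_pos; gcongr
    rw [Real.cos_pi_div_three] at this
    linarith

/-- Being a nonnegative combination of at most two simple roots. -/
def OnEdge (β : V) : Prop :=
  ∃ (i j : B) (a b : ℝ), 0 ≤ a ∧ 0 ≤ b ∧ β = a • G.root i + b • G.root j

theorem onEdge_of_eq {β : V} (hβ : β ∈ G.PosRoots) (i j : B) (a b : ℝ)
    (h : β = a • G.root i + b • G.root j) : G.OnEdge β := by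
  by_cases hij : i = j
  · subst hij
    refine ⟨i, i, a + b, 0, ?_, le_rfl, by rw [h]; module⟩
    have := G.pos_coord hβ i
    rw [h, map_add, map_smul, map_smul, coord_root] at this
    simpa using this
  · refine ⟨i, j, a, b, ?_, ?_, h⟩
    · have := G.pos_coord hβ i
      rw [h, map_add, map_smul, map_smul, coord_root, coord_root] at this
      simpa [Finsupp.single_apply, Ne.symm hij] using this
    · have := G.pos_coord hβ j
      rw [h, map_add, map_smul, map_smul, coord_root, coord_root] at this
      simpa [Finsupp.single_apply, hij] using this

theorem onEdge_of_small (h : ∀ i j : B, i ≠ j → M i j = 0 ∨ 3 ≤ M i j) :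
    ∀ (d : ℕ) (β : V) (w : W), cs.length w = d → G.ρ w β ∈ G.NegRoots → G.IsSmall β →
      G.OnEdge β := by
  intro d
  induction d using Nat.strong_induction_on with
  | _ d ih =>
  intro β w hd hw hβ
  obtain ⟨r, hr⟩ := G.exists_form_pos hβ.1
  by_cases hne : β = G.root r
  · exact G.onEdge_of_eq hβ.1 r r 1 0 (by rw [hne]; module)
  obtain ⟨w', hw'l, hw'⟩ := G.depth_descend r hβ.1 hr w hw
  have hγ := G.small_descend r hβ hne hr
  obtain ⟨i, j, a, b, ha, hb, hab⟩ := ih _ (hd ▸ hw'l) _ w' rfl hw' hγ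
  have hβe : β = a • G.root i + b • G.root j + (2 * G.form β (G.root r)) • G.root r := by
    rw [← hab, G.simple_act, G.form_symm]; module
  set c := 2 * G.form β (G.root r) with hc
  by_cases ha0 : a = 0
  · exact G.onEdge_of_eq hβ.1 j r b c (by rw [hβe, ha0]; module)
  by_cases hb0 : b = 0
  · exact G.onEdge_of_eq hβ.1 i r a c (by rw [hβe, hb0]; module)
  by_cases hij : i = j
  · exact G.onEdge_of_eq hβ.1 i r (a + b) c (by rw [hβe, hij]; module)
  by_cases hir : i = r
  · exact G.onEdge_of_eq hβ.1 i j (a + c) b (by rw [hβe, hir]; module)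
  by_cases hjr : j = r
  · exact G.onEdge_of_eq hβ.1 i j a (b + c) (by rw [hβe, hjr]; module)
  exfalso
  have hgood := G.pos_good hγ.1
  have ha1 : 1 ≤ a := by
    have := hgood.2 i
    rw [hab, map_add, map_smul, map_smul, coord_root, coord_root] at this
    simp only [Finsupp.add_apply, Finsupp.smul_apply, Finsupp.single_apply, Ne.symm hij,
      if_true, if_false, smul_eq_mul, mul_one, mul_zero, add_zero] at this
    exact this.resolve_left ha0
  have hb1 : 1 ≤ b := by
    have := hgood.2 j
    rw [hab, map_add, map_smul, map_smul, coord_root, coord_root] at this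
    simp only [Finsupp.add_apply, Finsupp.smul_apply, Finsupp.single_apply, hij,
      if_true, if_false, smul_eq_mul, mul_one, mul_zero, zero_add] at this
    exact this.resolve_left hb0
  have h1 := G.form_le_neg_half h hir
  have h2 := G.form_le_neg_half h hjr
  have hf : G.form (G.ρ (cs.simple r) β) (G.root r) = - G.form β (G.root r) := by
    rw [← G.form_preserved (cs.simple r), act_simple_simple, act_simple_root, map_neg]
  rw [hab, map_add, map_smul, map_smul] at hf
  simp only [LinearMap.add_apply, LinearMap.smul_apply, smul_eq_mul] at hf
  have hge : 1 ≤ G.form β (G.root r) := by nlinarith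
  exact hne (hβ.2 _ (G.root_pos r) (G.dominates_simple r hβ.1 hne hge)).symm

end GeomRep

/-- If no two generators commute (all `m_{st} ≥ 3`, possibly `∞`), every small root is a
nonnegative combination of at most two simple roots. -/
theorem smallRoots_on_edges {B : Type*} {W : Type*} [Group W] {M : CoxeterMatrix B}
    (cs : CoxeterSystem M W) {V : Type*} [AddCommGroup V] [Module ℝ V]
    (G : GeomRep M cs V) [Finite B]
    (h : ∀ i j : B, i ≠ j → M i j = 0 ∨ 3 ≤ M i j) :
    ∀ β : V, G.IsSmall β →
      ∃ (i j : B) (a b : ℝ), 0 ≤ a ∧ 0 ≤ b ∧ β = a • G.root i + b • G.root j := by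
  intro β hβ
  obtain ⟨u, i, hu⟩ := hβ.1.1
  refine G.onEdge_of_small h _ β (cs.simple i * u⁻¹) rfl ?_ hβ
  have e : G.ρ u⁻¹ β = G.root i := by rw [hu, ← G.act_mul]; simp [G.act_one]
  rw [G.act_mul, e, G.act_simple_root]
  exact G.neg_mem_neg (G.root_pos i)
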